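/- Let C be a regular Ord-category and consider ideals R: X ↬ Y, S: Z ↬ Y and T: Z ↬ W. Then T∘S°∘R ≅ T∘S^*∘R; in particular, the composite relation T∘S°∘R is an ideal. -/

import Mathlib

open CategoryTheory

universe w v u

/-- An `Ord`-enrichment of a category: a preorder on each hom-set,
preserved by composition on both sides. -/
class OrdEnrichment (C : Type u) [Category.{v} C] : Type (max u v) where
  ord : ∀ {X Y : C}, (X ⟶ Y) → (X ⟶ Y) → Prop
  ord_refl : ∀ {X Y : C} (f : X ⟶ Y), ord f f
  ord_trans : ∀ {X Y : C} {f g h : X ⟶ Y}, ord f g → ord g h → ord f h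
  precomp_ord : ∀ {X Y Z : C} (e : X ⟶ Y) {f g : Y ⟶ Z}, ord f g → ord (e ≫ f) (e ≫ g)
  postcomp_ord : ∀ {X Y Z : C} {f g : X ⟶ Y} (h : Y ⟶ Z), ord f g → ord (f ≫ h) (g ≫ h)

/-- The preorder on hom-sets of an `Ord`-category. -/
def homLe {C : Type u} [Category.{v} C] [OrdEnrichment C] {X Y : C} (f g : X ⟶ Y) : Prop :=
  OrdEnrichment.ord f g

infixl:50 " ≼ " => homLe

section

variable {C : Type u} [Category.{v} C] [OrdEnrichment C]

/-- A full (ff-) morphism. -/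
def IsFF {X Y : C} (m : X ⟶ Y) : Prop :=
  ∀ {A : C} (a a' : A ⟶ X), (a ≫ m) ≼ (a' ≫ m) → a ≼ a'

/-- An ff-monomorphism: a full monomorphism. -/
def IsFFMono {X Y : C} (m : X ⟶ Y) : Prop := IsFF m ∧ Mono m

/-- An so-morphism: a morphism left orthogonal to every ff-monomorphism. -/
def IsSO {A B : C} (e : A ⟶ B) : Prop :=
  ∀ {X Y : C} (m : X ⟶ Y), IsFFMono m → ∀ (u : A ⟶ X) (v : B ⟶ Y),
    u ≫ m = e ≫ v → ∃ d : B ⟶ X, e ≫ d = u ∧ d ≫ m = v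

/-- The (strict) comma object square for the ordered pair `(f, g)`. -/
structure IsCommaSq {X Y Z : C} (f : X ⟶ Y) (g : Z ⟶ Y) (P : C)
    (π₁ : P ⟶ X) (π₂ : P ⟶ Z) : Prop where
  le : (π₁ ≫ f) ≼ (π₂ ≫ g)
  lift : ∀ {A : C} (α : A ⟶ X) (β : A ⟶ Z), (α ≫ f) ≼ (β ≫ g) →
    ∃! h : A ⟶ P, h ≫ π₁ = α ∧ h ≫ π₂ = β
  lift_ord : ∀ {A : C} {h h' : A ⟶ P}, (h ≫ π₁) ≼ (h' ≫ π₁) → (h ≫ π₂) ≼ (h' ≫ π₂) → h ≼ h'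

/-- A 2-pullback square (pullback with the `Ord`-enriched universal property). -/
structure Is2Pullback {X Y Z : C} (f : X ⟶ Z) (g : Y ⟶ Z) (P : C)
    (p : P ⟶ X) (q : P ⟶ Y) : Prop where
  comm : p ≫ f = q ≫ g
  lift : ∀ {A : C} (a : A ⟶ X) (b : A ⟶ Y), a ≫ f = b ≫ g →
    ∃! h : A ⟶ P, h ≫ p = a ∧ h ≫ q = b
  lift_ord : ∀ {A : C} {h h' : A ⟶ P}, (h ≫ p) ≼ (h' ≫ p) → (h ≫ q) ≼ (h' ≫ q) → h ≼ h'

/-- A binary 2-product. -/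
structure Is2Product (X Y : C) (P : C) (p : P ⟶ X) (q : P ⟶ Y) : Prop where
  lift : ∀ {A : C} (a : A ⟶ X) (b : A ⟶ Y), ∃! h : A ⟶ P, h ≫ p = a ∧ h ≫ q = b
  lift_ord : ∀ {A : C} {h h' : A ⟶ P}, (h ≫ p) ≼ (h' ≫ p) → (h ≫ q) ≼ (h' ≫ q) → h ≼ h'

/-- A 2-equalizer. -/
structure Is2Equalizer {X Y : C} (f g : X ⟶ Y) (E : C) (i : E ⟶ X) : Prop where
  comm : i ≫ f = i ≫ g
  lift : ∀ {A : C} (a : A ⟶ X), a ≫ f = a ≫ g → ∃! h : A ⟶ E, h ≫ i = a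
  lift_ord : ∀ {A : C} {h h' : A ⟶ E}, (h ≫ i) ≼ (h' ≫ i) → h ≼ h'

/-- A bicoinserter of a parallel pair. -/
structure IsBicoinserter {X A E : C} (a b : X ⟶ A) (e : A ⟶ E) : Prop where
  le : (a ≫ e) ≼ (b ≫ e)
  desc : ∀ {F : C} (f : A ⟶ F), (a ≫ f) ≼ (b ≫ f) →
    ∃ t : E ⟶ F, (e ≫ t) ≼ f ∧ f ≼ (e ≫ t)
  desc_ord : ∀ {F : C} {f f' : A ⟶ F} {t t' : E ⟶ F},
    (e ≫ t) ≼ f → f ≼ (e ≫ t) → (e ≫ t') ≼ f' → f' ≼ (e ≫ t') → f ≼ f' → t ≼ t'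

/-- A relation from `X` to `Y` in an `Ord`-category: a jointly ff-monomorphic span. -/
structure RelStr (X Y : C) : Type (max u v) where
  obj : C
  p : obj ⟶ X
  q : obj ⟶ Y
  jointly_ff : ∀ {A : C} (a a' : A ⟶ obj), (a ≫ p) ≼ (a' ≫ p) → (a ≫ q) ≼ (a' ≫ q) → a ≼ a'
  jointly_mono : ∀ {A : C} (a a' : A ⟶ obj), a ≫ p = a' ≫ p → a ≫ q = a' ≫ q → a = a'

/-- `(x, y) ∈_A R`. -/
def RelStr.Mem {X Y : C} (R : RelStr X Y) {A : C} (x : A ⟶ X) (y : A ⟶ Y) : Prop :=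
  ∃ h : A ⟶ R.obj, h ≫ R.p = x ∧ h ≫ R.q = y

/-- `R ⊆ S`: `R` factors through `S` (over `X × Y`). -/
def RelStr.Sub {X Y : C} (R S : RelStr X Y) : Prop :=
  ∃ φ : R.obj ⟶ S.obj, φ ≫ S.p = R.p ∧ φ ≫ S.q = R.q

/-- `R ≅ S`: mutual factorisation. -/
def RelStr.Iso {X Y : C} (R S : RelStr X Y) : Prop := R.Sub S ∧ S.Sub R

/-- The opposite relation `R°`. -/
def RelStr.op {X Y : C} (R : RelStr X Y) : RelStr Y X where
  obj := R.obj
  p := R.q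
  q := R.p
  jointly_ff := fun a a' h1 h2 => R.jointly_ff a a' h2 h1
  jointly_mono := fun a a' h1 h2 => R.jointly_mono a a' h2 h1

/-- A relation is an (order) ideal when it is closed under lowering the first
coordinate and raising the second coordinate. -/
def IsIdealRel {X Y : C} (R : RelStr X Y) : Prop :=
  ∀ {A : C} (x x' : A ⟶ X) (y y' : A ⟶ Y), x' ≼ x → R.Mem x y → y ≼ y' → R.Mem x' y'

/-- The relation `f_♯` given by the span `(1_X, f)`. -/
def sharpRel {X Y : C} (f : X ⟶ Y) : RelStr X Y where
  obj := X
  p := 𝟙 X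
  q := f
  jointly_ff := fun a a' h1 _ => by simpa using h1
  jointly_mono := fun a a' h1 _ => by simpa using h1

/-- The relation `f°`, the opposite of `f_♯`. -/
def cosharpRel {X Y : C} (f : X ⟶ Y) : RelStr Y X := (sharpRel f).op

/-- `M` is the meet (intersection) `R ∧ S` of two relations. -/
def IsMeetRel {X Y : C} (R S M : RelStr X Y) : Prop :=
  M.Sub R ∧ M.Sub S ∧
    ∀ {A : C} (x : A ⟶ X) (y : A ⟶ Y), R.Mem x y → S.Mem x y → M.Mem x y

/-- `T` is the composite `S ∘ R` of the relations `R : X ↬ Y` and `S : Y ↬ Z`,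
obtained via the (so-morphism, ff-monomorphism) factorisation of the span
given by the 2-pullback over the middle object. -/
def IsCompositeRel {X Y Z : C} (R : RelStr X Y) (S : RelStr Y Z) (T : RelStr X Z) : Prop :=
  ∃ (P : C) (p₁ : P ⟶ R.obj) (p₂ : P ⟶ S.obj) (e : P ⟶ T.obj),
    Is2Pullback R.q S.p P p₁ p₂ ∧ IsSO e ∧ e ≫ T.p = p₁ ≫ R.p ∧ e ≫ T.q = p₂ ≫ S.q

/-- `R` is the ideal `f_* = f / 1_Y : X ↬ Y`. -/
def IsStarRel {X Y : C} (f : X ⟶ Y) (R : RelStr X Y) : Prop :=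
  IsCommaSq f (𝟙 Y) R.obj R.p R.q

/-- `R` is the ideal `f^* = 1_Y / f : Y ↬ X`. -/
def IsCostarRel {X Y : C} (f : X ⟶ Y) (R : RelStr Y X) : Prop :=
  IsCommaSq (𝟙 Y) f R.obj R.p R.q

/-- `R` is the identity ideal `I_X = 1_X / 1_X`. -/
def IsIdRel (X : C) (R : RelStr X X) : Prop :=
  IsCommaSq (𝟙 X) (𝟙 X) R.obj R.p R.q

/-- `S` is the 2-pullback of the relation `R ↣ X × Y` along `f × g`. -/
def IsRelPullback {X Y U V : C} (R : RelStr X Y) (f : U ⟶ X) (g : V ⟶ Y)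
    (S : RelStr U V) : Prop :=
  ∃ h : S.obj ⟶ R.obj, h ≫ R.p = S.p ≫ f ∧ h ≫ R.q = S.q ≫ g ∧
    ∀ {A : C} (a : A ⟶ U) (b : A ⟶ V) (c : A ⟶ R.obj),
      c ≫ R.p = a ≫ f → c ≫ R.q = b ≫ g →
      ∃ d : A ⟶ S.obj, d ≫ S.p = a ∧ d ≫ S.q = b ∧ d ≫ h = c

/-- A binary 2-coproduct. -/
structure Is2Coproduct (X Y : C) (P : C) (i : X ⟶ P) (j : Y ⟶ P) : Prop where
  desc : ∀ {A : C} (a : X ⟶ A) (b : Y ⟶ A), ∃! h : P ⟶ A, i ≫ h = a ∧ j ≫ h = b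
  desc_ord : ∀ {A : C} {h h' : P ⟶ A}, (i ≫ h) ≼ (i ≫ h') → (j ≫ h) ≼ (j ≫ h') → h ≼ h'

/-- A ternary 2-coproduct. -/
structure Is3Coproduct (X Y Z : C) (P : C) (i : X ⟶ P) (j : Y ⟶ P) (k : Z ⟶ P) : Prop where
  desc : ∀ {A : C} (a : X ⟶ A) (b : Y ⟶ A) (c : Z ⟶ A),
    ∃! h : P ⟶ A, i ≫ h = a ∧ j ≫ h = b ∧ k ≫ h = c
  desc_ord : ∀ {A : C} {h h' : P ⟶ A},
    (i ≫ h) ≼ (i ≫ h') → (j ≫ h) ≼ (j ≫ h') → (k ≫ h) ≼ (k ≫ h') → h ≼ h'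

/-- Reflexivity of a relation on `X`: the diagonal factors through it. -/
def ReflexiveRel {X : C} (R : RelStr X X) : Prop := R.Mem (𝟙 X) (𝟙 X)

/-- Transitivity of a relation on `X`: `R ∘ R ⊆ R`. -/
def TransitiveRel {X : C} (R : RelStr X X) : Prop :=
  ∀ T : RelStr X X, IsCompositeRel R R T → T.Sub R

/-- A congruence: a reflexive and transitive ideal. -/
def IsCongruence {X : C} (R : RelStr X X) : Prop :=
  IsIdealRel R ∧ ReflexiveRel R ∧ TransitiveRel R

/-- An effective congruence: `R ≅ f^* ∘ f_*` for some morphism `f`. -/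
def EffectiveCongruence {X : C} (R : RelStr X X) : Prop :=
  ∃ (Y : C) (f : X ⟶ Y) (Fstar : RelStr X Y) (Fco : RelStr Y X) (T : RelStr X X),
    IsStarRel f Fstar ∧ IsCostarRel f Fco ∧ IsCompositeRel Fstar Fco T ∧ R.Iso T

/-- The `Ord`-enriched difunctionality property of a relation. -/
def OrdDifunctional {X Y : C} (D : RelStr X Y) : Prop :=
  ∀ {A : C} (x u u' : A ⟶ X) (y y' v : A ⟶ Y),
    D.Mem x y → y ≼ y' → D.Mem u y' → u ≼ u' → D.Mem u' v → D.Mem x v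

end

/-- A regular `Ord`-category: finite weighted limits, an
(so-morphism, ff-monomorphism) factorisation system, so-morphisms stable under
2-pullbacks, and every so-morphism the bicoinserter of its comma object projections. -/
structure IsRegularOrd (C : Type u) [Category.{v} C] [OrdEnrichment C] : Prop where
  hasTerminal : ∃ T : C, ∀ A : C, ∃ f : A ⟶ T, ∀ g : A ⟶ T, g = f
  has2Products : ∀ X Y : C, ∃ (P : C) (p : P ⟶ X) (q : P ⟶ Y), Is2Product X Y P p q
  has2Equalizers : ∀ {X Y : C} (f g : X ⟶ Y), ∃ (E : C) (i : E ⟶ X), Is2Equalizer f g E i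
  has2Pullbacks : ∀ {X Y Z : C} (f : X ⟶ Z) (g : Y ⟶ Z),
    ∃ (P : C) (p : P ⟶ X) (q : P ⟶ Y), Is2Pullback f g P p q
  hasCommaObjects : ∀ {X Y Z : C} (f : X ⟶ Y) (g : Z ⟶ Y),
    ∃ (P : C) (p : P ⟶ X) (q : P ⟶ Z), IsCommaSq f g P p q
  fact : ∀ {X Y : C} (f : X ⟶ Y), ∃ (I : C) (e : X ⟶ I) (m : I ⟶ Y),
    IsSO e ∧ IsFFMono m ∧ e ≫ m = f
  so_pullback_stable : ∀ {X Y Z P : C} (f : X ⟶ Z) (g : Y ⟶ Z) (p : P ⟶ X) (q : P ⟶ Y),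
    Is2Pullback f g P p q → IsSO g → IsSO p
  so_bicoinserter : ∀ {A B P : C} (e : A ⟶ B), IsSO e →
    ∀ (π₁ π₂ : P ⟶ A), IsCommaSq e e P π₁ π₂ → IsBicoinserter π₁ π₂ e

/-- An `Ord`-Mal'tsev category: every ideal is `Ord`-difunctional. -/
def IsOrdMaltsev (C : Type u) [Category.{v} C] [OrdEnrichment C] : Prop :=
  ∀ (X Y : C) (D : RelStr X Y), IsIdealRel D → OrdDifunctional D

/-- An `Ord`-W-Mal'tsev object: every ideal is `Ord`-difunctional with respect to
generalised elements with domain `Y`. -/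
def IsOrdWMaltsevObj {C : Type u} [Category.{v} C] [OrdEnrichment C] (Y : C) : Prop :=
  ∀ (X Z : C) (R : RelStr X Z), IsIdealRel R →
    ∀ (x u u' : Y ⟶ X) (z z' v : Y ⟶ Z),
      R.Mem x z → z ≼ z' → R.Mem u z' → u ≼ u' → R.Mem u' v → R.Mem x v


section Helpers

variable {C : Type u} [Category.{v} C] [OrdEnrichment C]

theorem RelStr.Mem.precomp {X Y : C} {R : RelStr X Y} {A B : C} {x : A ⟶ X} {y : A ⟶ Y}
    (h : R.Mem x y) (e : B ⟶ A) : R.Mem (e ≫ x) (e ≫ y) := by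
  obtain ⟨k, rfl, rfl⟩ := h
  exact ⟨e ≫ k, by simp, by simp⟩

theorem IsSO.comp {A B D : C} {e : A ⟶ B} {f : B ⟶ D} (he : IsSO e) (hf : IsSO f) :
    IsSO (e ≫ f) := by
  intro X Y m hm a b hab
  obtain ⟨d, hd1, hd2⟩ := he m hm a (f ≫ b) (by simpa using hab)
  obtain ⟨d', hd1', hd2'⟩ := hf m hm d b hd2
  exact ⟨d', by rw [Category.assoc, hd1', hd1], hd2'⟩

/-- Membership in a relation is local for so-morphisms. -/
theorem RelStr.Mem.of_so (hC : IsRegularOrd C) {X Y : C} {R : RelStr X Y} {A B : C} {e : B ⟶ A}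
    (he : IsSO e) {x : A ⟶ X} {y : A ⟶ Y} (h : R.Mem (e ≫ x) (e ≫ y)) : R.Mem x y := by
  obtain ⟨P, p, q, hP⟩ := hC.has2Products X Y
  obtain ⟨m, ⟨hmp, hmq⟩, -⟩ := hP.lift R.p R.q
  obtain ⟨b, ⟨hbp, hbq⟩, -⟩ := hP.lift x y
  obtain ⟨k, hk1, hk2⟩ := h
  have hm : IsFFMono m := by
    refine ⟨?_, ⟨?_⟩⟩
    · intro D a a' haa
      apply R.jointly_ff
      · have := OrdEnrichment.postcomp_ord p haa
        rwa [Category.assoc, Category.assoc, hmp] at this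
      · have := OrdEnrichment.postcomp_ord q haa
        rwa [Category.assoc, Category.assoc, hmq] at this
    · intro D a a' haa
      apply R.jointly_mono
      · rw [← hmp, ← Category.assoc, haa, Category.assoc]
      · rw [← hmq, ← Category.assoc, haa, Category.assoc]
  have hkm : k ≫ m = e ≫ b := by
    refine (hP.lift (e ≫ x) (e ≫ y)).unique ⟨?_, ?_⟩ ⟨?_, ?_⟩
    · rw [Category.assoc, hmp, hk1]
    · rw [Category.assoc, hmq, hk2]
    · rw [Category.assoc, hbp]
    · rw [Category.assoc, hbq]
  obtain ⟨d, -, hd⟩ := he m hm k b hkm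
  exact ⟨d, by rw [← hmp, ← Category.assoc, hd, hbp], by rw [← hmq, ← Category.assoc, hd, hbq]⟩

theorem IsCompositeRel.mem {X Y Z : C} {R : RelStr X Y} {S : RelStr Y Z} {T : RelStr X Z}
    (hT : IsCompositeRel R S T) {A : C} {x : A ⟶ X} {y : A ⟶ Y} {z : A ⟶ Z}
    (h1 : R.Mem x y) (h2 : S.Mem y z) : T.Mem x z := by
  obtain ⟨P, p₁, p₂, e, hP, -, hp, hq⟩ := hT
  obtain ⟨a, rfl, ha⟩ := h1
  obtain ⟨b, hb, rfl⟩ := h2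
  obtain ⟨k, ⟨hk1, hk2⟩, -⟩ := hP.lift a b (ha.trans hb.symm)
  refine ⟨k ≫ e, ?_, ?_⟩
  · rw [Category.assoc, hp, ← Category.assoc, hk1]
  · rw [Category.assoc, hq, ← Category.assoc, hk2]

theorem IsCompositeRel.exists_of_mem (hC : IsRegularOrd C) {X Y Z : C} {R : RelStr X Y}
    {S : RelStr Y Z} {T : RelStr X Z}
    (hT : IsCompositeRel R S T) {A : C} {x : A ⟶ X} {z : A ⟶ Z} (h : T.Mem x z) :
    ∃ (B : C) (e : B ⟶ A) (y : B ⟶ Y), IsSO e ∧ R.Mem (e ≫ x) y ∧ S.Mem y (e ≫ z) := by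
  obtain ⟨P, p₁, p₂, e, hP, he, hp, hq⟩ := hT
  obtain ⟨k, rfl, rfl⟩ := h
  obtain ⟨B, f, g, hB⟩ := hC.has2Pullbacks k e
  refine ⟨B, f, g ≫ p₁ ≫ R.q, hC.so_pullback_stable _ _ _ _ hB he, ⟨g ≫ p₁, ?_, ?_⟩,
    ⟨g ≫ p₂, ?_, ?_⟩⟩
  · rw [Category.assoc, ← hp, ← Category.assoc, ← hB.comm, Category.assoc]
  · rw [Category.assoc]
  · rw [Category.assoc, hP.comm]
  · rw [Category.assoc, ← hq, ← Category.assoc, ← hB.comm, Category.assoc]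

theorem RelStr.Mem.op {X Y : C} {R : RelStr X Y} {A : C} {x : A ⟶ X} {y : A ⟶ Y}
    (h : R.Mem x y) : R.op.Mem y x := by
  obtain ⟨k, h1, h2⟩ := h
  exact ⟨k, h2, h1⟩

end Helpers

/-- `T ∘ S° ∘ R ≅ T ∘ S^* ∘ R`; in particular `T ∘ S° ∘ R` is an ideal. -/
theorem statement9 {C : Type u} [Category.{v} C] [OrdEnrichment C] (hC : IsRegularOrd C)
    {X Y Z W : C} (R : RelStr X Y) (hR : IsIdealRel R)
    (S : RelStr Z Y) (hS : IsIdealRel S)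
    (T : RelStr Z W) (hT : IsIdealRel T)
    (A1 : RelStr X Z) (hA1 : IsCompositeRel R S.op A1)
    (A2 : RelStr X W) (hA2 : IsCompositeRel A1 T A2)
    -- `S^* = (s₁)_* ∘ (s₂)^*`
    (S1star : RelStr S.obj Z) (hS1star : IsStarRel S.p S1star)
    (S2co : RelStr Y S.obj) (hS2co : IsCostarRel S.q S2co)
    (Supper : RelStr Y Z) (hSupper : IsCompositeRel S2co S1star Supper)
    (B1 : RelStr X Z) (hB1 : IsCompositeRel R Supper B1)
    (B2 : RelStr X W) (hB2 : IsCompositeRel B1 T B2) :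
    A2.Iso B2 ∧ IsIdealRel A2 := by
  have subAB : A2.Sub B2 := by
    change B2.Mem A2.p A2.q
    obtain ⟨B, e, z, he, h1, h2⟩ := hA2.exists_of_mem hC ⟨𝟙 _, Category.id_comp _, Category.id_comp _⟩
    obtain ⟨D, f, y, hf, h3, h4⟩ := hA1.exists_of_mem hC h1
    have h5 : S.Mem (f ≫ z) y := h4.op
    obtain ⟨s, hs2, hs1⟩ := h5
    apply RelStr.Mem.of_so hC (hf.comp he)
    simp only [Category.assoc]
    refine hB2.mem (hB1.mem h3 (hSupper.mem (y := s) ?_ ?_)) (h2.precomp f)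
    · obtain ⟨k, hk, -⟩ := hS2co.lift y s (by
        rw [Category.comp_id, hs1]; exact OrdEnrichment.ord_refl _)
      exact ⟨k, hk⟩
    · obtain ⟨k, hk, -⟩ := hS1star.lift s (f ≫ z) (by
        rw [Category.comp_id, hs2]; exact OrdEnrichment.ord_refl _)
      exact ⟨k, hk⟩
  have subBA : B2.Sub A2 := by
    change A2.Mem B2.p B2.q
    obtain ⟨B, e, z, he, h1, h2⟩ := hB2.exists_of_mem hC ⟨𝟙 _, Category.id_comp _, Category.id_comp _⟩
    obtain ⟨D, f, y, hf, h3, h4⟩ := hB1.exists_of_mem hC h1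
    obtain ⟨E, g, s, hg, ⟨k, hk1, hk2⟩, ⟨l, hl1, hl2⟩⟩ := hSupper.exists_of_mem hC h4
    have ly : (g ≫ y) ≼ (s ≫ S.q) := by
      have := OrdEnrichment.precomp_ord k hS2co.le
      rw [Category.comp_id, ← Category.assoc, hk1, hk2] at this
      exact this
    have lz : (s ≫ S.p) ≼ (g ≫ f ≫ z) := by
      have := OrdEnrichment.precomp_ord l hS1star.le
      rw [Category.comp_id, ← Category.assoc, hl1, hl2] at this
      exact this
    apply RelStr.Mem.of_so hC (hg.comp (hf.comp he))
    simp only [Category.assoc]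
    have hR' := hR _ _ _ _ (OrdEnrichment.ord_refl _) (h3.precomp g) ly
    have hT' := hT _ _ _ _ lz ((h2.precomp f).precomp g) (OrdEnrichment.ord_refl _)
    have hS' : S.Mem (s ≫ S.p) (s ≫ S.q) := ⟨s, rfl, rfl⟩
    exact hA2.mem (hA1.mem hR' hS'.op) hT'
  refine ⟨⟨subAB, subBA⟩, ?_⟩
  intro A x x' w w' hx h hw
  obtain ⟨B, e, z, he, h1, h2⟩ := hA2.exists_of_mem hC h
  obtain ⟨D, f, y, hf, h3, h4⟩ := hA1.exists_of_mem hC h1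
  apply RelStr.Mem.of_so hC (hf.comp he)
  simp only [Category.assoc]
  have hR' := hR _ _ _ _ (OrdEnrichment.precomp_ord f (OrdEnrichment.precomp_ord e hx)) h3
    (OrdEnrichment.ord_refl _)
  have hT' := hT _ _ _ _ (OrdEnrichment.ord_refl _) (h2.precomp f)
    (OrdEnrichment.precomp_ord f (OrdEnrichment.precomp_ord e hw))
  exact hA2.mem (hA1.mem hR' h4) hT'
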